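/- arXiv:1802.05632 — 3 statements merged into one kernel-verified Lean document; each statement's English description precedes it below -/
import Mathlib

section
/- Let H be a separable complex Hilbert space and K an index set, and for each n ≥ 0 let (e^n_k)_{k∈K} be an orthonormal basis of H such that e^n_k → e^0_k in norm for each k ∈ K. Let U_n be the unitary operator on H determined by U_n e^0_k = e^n_k for all k ∈ K. Then the sequence (U_n) converges strongly to the identity operator, and the sequence of adjoints (U_n†) also converges strongly to the identity operator. -/
open Filter Topology ContinuousLinearMap

/-- A sequence of linear isometries converging pointwise to the identity on a set with dense span
converges strongly to the identity. -/
theorem tendsto_id_of_tendsto_on_dense_span {𝕜 E : Type*} [RCLike 𝕜] [NormedAddCommGroup E]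
    [NormedSpace 𝕜 E] {T : ℕ → E →L[𝕜] E} (hT : ∀ n x, ‖T n x‖ = ‖x‖) {s : Set E}
    (hs : (Submodule.span 𝕜 s).topologicalClosure = ⊤)
    (hconv : ∀ x ∈ s, Tendsto (fun n => T n x) atTop (𝓝 x)) (x : E) :
    Tendsto (fun n => T n x) atTop (𝓝 x) := by
  have hspan : ∀ y ∈ Submodule.span 𝕜 s, Tendsto (fun n => T n y) atTop (𝓝 y) := by
    intro y hy
    induction hy using Submodule.span_induction with
    | mem y hy => exact hconv y hy
    | zero => simp
    | add y z _ _ hy hz => simpa using hy.add hz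
    | smul c y _ hy => simpa using hy.const_smul c
  have hx : x ∈ closure (Submodule.span 𝕜 s : Set E) := by
    rw [← Submodule.topologicalClosure_coe, hs]
    trivial
  rw [Metric.tendsto_atTop]
  intro ε hε
  obtain ⟨y, hy, hxy⟩ := Metric.mem_closure_iff.mp hx (ε / 3) (by positivity)
  obtain ⟨N, hN⟩ := Metric.tendsto_atTop.mp (hspan y hy) (ε / 3) (by positivity)
  refine ⟨N, fun n hn => ?_⟩
  have hTxy : dist (T n x) (T n y) = dist x y := by
    rw [dist_eq_norm, ← map_sub, hT, dist_eq_norm]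
  have htri := dist_triangle4 (T n x) (T n y) y x
  rw [hTxy, dist_comm y x] at htri
  linarith [hN n hn]

/-- Let `(e^n_k)_{k∈K}` (`n ≥ 0`) be orthonormal bases of a separable complex
Hilbert space with `e^n_k → e^0_k` in norm for each `k`, and let `U_n` be the unitary operator
determined by `U_n e^0_k = e^n_k`. Then `U_n → id` strongly and `U_n† → id` strongly. -/
theorem unitaries_from_converging_bases_tendsto_id
    {H : Type*} [NormedAddCommGroup H] [InnerProductSpace ℂ H] [CompleteSpace H]
    [TopologicalSpace.SeparableSpace H]
    {K : Type*} (e : ℕ → K → H)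
    (hon : ∀ n, Orthonormal ℂ (e n))
    (htotal : ∀ n, (Submodule.span ℂ (Set.range (e n))).topologicalClosure = ⊤)
    (hconv : ∀ k, Tendsto (fun n => e n k) atTop (𝓝 (e 0 k)))
    (U : ℕ → H →L[ℂ] H)
    (hUunit : ∀ n, (ContinuousLinearMap.adjoint (U n)) ∘L (U n) = 1 ∧
      (U n) ∘L (ContinuousLinearMap.adjoint (U n)) = 1)
    (hUe : ∀ n k, U n (e 0 k) = e n k) :
    (∀ x : H, Tendsto (fun n => U n x) atTop (𝓝 x)) ∧
    (∀ x : H, Tendsto (fun n => (ContinuousLinearMap.adjoint (U n)) x) atTop (𝓝 x)) := by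
  have hU : ∀ n x, ‖U n x‖ = ‖x‖ := fun n =>
    (U n).norm_map_iff_adjoint_comp_self.mpr (hUunit n).1
  have hlim : ∀ x : H, Tendsto (fun n => U n x) atTop (𝓝 x) := by
    refine tendsto_id_of_tendsto_on_dense_span hU (htotal 0) ?_
    rintro _ ⟨k, rfl⟩
    simpa only [hUe] using hconv k
  refine ⟨hlim, fun x => ?_⟩
  have hnorm : ∀ n, ‖adjoint (U n) x - x‖ = ‖U n x - x‖ := by
    intro n
    have hUU : U n (adjoint (U n) x) = x := DFunLike.congr_fun (hUunit n).2 x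
    rw [← hU n, map_sub, hUU, norm_sub_rev]
  rw [tendsto_iff_norm_sub_tendsto_zero]
  simpa only [hnorm] using tendsto_iff_norm_sub_tendsto_zero.mp (hlim x)
end

section
/- Let H and H' be complex Hilbert spaces, I a countable index set, and let E = ℓ²(I, H') be the Hilbert space of square-summable H'-valued families indexed by I. For each n ≥ 0 let V_n : H → E be an isometric bounded linear operator (‖V_n x‖ = ‖x‖ for all x), and define the component operators A^n_i : H → H' by A^n_i x = (V_n x)(i) for i ∈ I. Then the following are equivalent: (a) (V_n) converges strongly to V_0 and (V_n†) converges strongly to V_0†; (b) for every i ∈ I, (A^n_i) converges strongly to A^0_i and ((A^n_i)†) converges strongly to (A^0_i)† as n → ∞. -/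
open Filter Topology ContinuousLinearMap

/-- Uniformly bounded operators on `ℓ²(I, H')` that converge on every vector supported at a single
index converge strongly. -/
theorem tendsto_apply_of_tendsto_apply_single
    {𝕜 G F I : Type*} [RCLike 𝕜] [NormedAddCommGroup G] [InnerProductSpace 𝕜 G]
    [NormedAddCommGroup F] [NormedSpace 𝕜 F] [DecidableEq I]
    {ι : Type*} {l : Filter ι} {T : ι → lp (fun _ : I => G) 2 →L[𝕜] F}
    {S : lp (fun _ : I => G) 2 →L[𝕜] F} {C : NNReal} (hT : ∀ n, ‖T n‖₊ ≤ C)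
    (h : ∀ i y, Tendsto (fun n => T n (lp.single 2 i y)) l (𝓝 (S (lp.single 2 i y))))
    (y : lp (fun _ : I => G) 2) :
    Tendsto (fun n => T n y) l (𝓝 (S y)) := by
  have hequi : UniformEquicontinuous (fun n => (T n : lp (fun _ : I => G) 2 → F)) :=
    LipschitzWith.uniformEquicontinuous _ C fun n => (T n).lipschitz.weaken (hT n)
  refine (hequi.equicontinuous.isClosed_setOfPred_tendsto S.continuous).mem_of_tendsto
    (lp.hasSum_single (by simp) y) (Eventually.of_forall fun s => ?_)
  change Tendsto (fun n => T n (∑ i ∈ s, _)) l (𝓝 (S (∑ i ∈ s, _)))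
  simp only [map_sum]
  exact tendsto_finsetSum s fun i _ => h i _

/-- For isometries, strong convergence of the adjoints implies strong convergence. -/
theorem tendsto_apply_of_tendsto_adjoint_apply
    {𝕜 E F : Type*} [RCLike 𝕜] [NormedAddCommGroup E] [InnerProductSpace 𝕜 E] [CompleteSpace E]
    [NormedAddCommGroup F] [InnerProductSpace 𝕜 F] [CompleteSpace F]
    {ι : Type*} {l : Filter ι} {V : ι → E →L[𝕜] F} {W : E →L[𝕜] F}
    (hV : ∀ n x, ‖V n x‖ = ‖x‖) (hW : ∀ x, ‖W x‖ = ‖x‖)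
    (h : ∀ y, Tendsto (fun n => adjoint (V n) y) l (𝓝 (adjoint W y))) (x : E) :
    Tendsto (fun n => V n x) l (𝓝 (W x)) := by
  have hsq (n : ι) : ‖V n x - W x‖ ^ 2 =
      2 * ‖x‖ ^ 2 - 2 * RCLike.re (inner 𝕜 x (adjoint (V n) (W x))) := by
    rw [@norm_sub_sq 𝕜, hV, hW, adjoint_inner_right]
    ring
  have hlim : Tendsto (fun n => ‖V n x - W x‖ ^ 2) l (𝓝 0) := by
    have hre : Tendsto (fun n => RCLike.re (inner 𝕜 x (adjoint (V n) (W x)))) l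
        (𝓝 (‖x‖ ^ 2)) := by
      rw [← hW x, ← @inner_self_eq_norm_sq 𝕜 _ _ _ _ (W x), ← adjoint_inner_right]
      exact (RCLike.continuous_re.tendsto _).comp (tendsto_const_nhds.inner (h (W x)))
    simp only [hsq]
    have hsub := (hre.const_mul 2).const_sub (2 * ‖x‖ ^ 2)
    rwa [sub_self (2 * ‖x‖ ^ 2)] at hsub
  rw [tendsto_iff_norm_sub_tendsto_zero]
  simpa using hlim.sqrt

/-- Let `E = ℓ²(I, H')` with `I` countable, let `V_n : H → E` (`n ≥ 0`) be
isometric bounded linear operators, and let `A^n_i : H → H'` be the component operators,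
`A^n_i x = (V_n x)(i)`. Then `V_n → V_0` and `V_n† → V_0†` strongly if and only if, for every
`i`, `A^n_i → A^0_i` and `(A^n_i)† → (A^0_i)†` strongly. -/
theorem stinespring_isometries_strong_star_iff_kraus
    {H H' : Type*} [NormedAddCommGroup H] [InnerProductSpace ℂ H] [CompleteSpace H]
    [NormedAddCommGroup H'] [InnerProductSpace ℂ H'] [CompleteSpace H']
    {I : Type*} [Countable I]
    (V : ℕ → H →L[ℂ] lp (fun _ : I => H') 2)
    (hiso : ∀ n, ∀ x : H, ‖V n x‖ = ‖x‖)
    (A : ℕ → I → H →L[ℂ] H')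
    (hA : ∀ n, ∀ i, ∀ x : H, A n i x = (V n x) i) :
    ((∀ x : H, Tendsto (fun n => V n x) atTop (𝓝 (V 0 x))) ∧
     (∀ y : lp (fun _ : I => H') 2,
        Tendsto (fun n => (ContinuousLinearMap.adjoint (V n)) y) atTop
          (𝓝 ((ContinuousLinearMap.adjoint (V 0)) y)))) ↔
    (∀ i : I,
      (∀ x : H, Tendsto (fun n => A n i x) atTop (𝓝 (A 0 i x))) ∧
      (∀ y : H', Tendsto (fun n => (ContinuousLinearMap.adjoint (A n i)) y) atTop
        (𝓝 ((ContinuousLinearMap.adjoint (A 0 i)) y)))) := by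
  classical
  have hadj (n : ℕ) (i : I) (y : H') :
      adjoint (A n i) y = adjoint (V n) (lp.single 2 i y) := by
    refine ext_inner_right ℂ fun x => ?_
    rw [adjoint_inner_left, adjoint_inner_left, lp.inner_single_left, hA]
  constructor
  · rintro ⟨hV, hVadj⟩ i
    refine ⟨fun x => ?_, fun y => ?_⟩
    · simp only [hA]
      exact ((lp.evalCLM ℂ (fun _ : I => H') 2 i).continuous.tendsto _).comp (hV x)
    · simp only [hadj]
      exact hVadj _
  · intro h
    have hbound (n : ℕ) : ‖adjoint (V n)‖₊ ≤ 1 := by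
      rw [LinearIsometryEquiv.nnnorm_map]
      exact (V n).opNNNorm_le_bound 1 fun x => by
        rw [one_mul, ← NNReal.coe_le_coe, coe_nnnorm, coe_nnnorm, hiso]
    have hVadj := tendsto_apply_of_tendsto_apply_single (l := atTop) (S := adjoint (V 0)) hbound
      fun i y => by simpa only [hadj] using (h i).2 y
    exact ⟨tendsto_apply_of_tendsto_adjoint_apply hiso (hiso 0) hVadj, hVadj⟩
end

section
/- Let d be a positive integer, (c_n)_{n≥0} a sequence of vectors in ℝ^d, and (B_n)_{n≥0} a sequence of real symmetric d×d matrices. Then the functions f_n : ℝ^d → ℂ, f_n(z) = exp(i⟨c_n, z⟩ − ½ zᵀB_n z), converge pointwise to f_0 (i.e., f_n(z) → f_0(z) for every z ∈ ℝ^d) if and only if c_n → c_0 in ℝ^d and B_n → B_0 entrywise. -/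
open Filter Topology Matrix

/-- If `exp(i t a_n) → exp(i t a)` for every real `t`, then `a_n → a`. This is Lévy's continuity
theorem for Dirac masses. -/
theorem tendsto_of_forall_tendsto_exp_mul_I {u : ℕ → ℝ} {a : ℝ}
    (h : ∀ t : ℝ, Tendsto (fun n => Complex.exp ((t * u n : ℝ) * Complex.I)) atTop
      (𝓝 (Complex.exp ((t * a : ℝ) * Complex.I)))) :
    Tendsto u atTop (𝓝 a) := by
  have key : Tendsto (fun n => MeasureTheory.diracProba (u n)) atTop
      (𝓝 (MeasureTheory.diracProba a)) := by
    rw [MeasureTheory.ProbabilityMeasure.tendsto_iff_tendsto_charFun]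
    intro t
    simpa [MeasureTheory.diracProba, MeasureTheory.charFun_dirac, mul_comm] using h t
  exact MeasureTheory.isEmbedding_diracProba.tendsto_nhds_iff.mpr key

/-- If the quadratic forms of symmetric matrices converge pointwise, then so do the entries. -/
theorem Matrix.IsSymm.tendsto_apply_of_tendsto_quadratic {ι α : Type*} [Fintype ι]
    {l : Filter α} {B : α → Matrix ι ι ℝ} {A : Matrix ι ι ℝ}
    (hB : ∀ n, (B n).IsSymm) (hA : A.IsSymm)
    (h : ∀ z : ι → ℝ, Tendsto (fun n => z ⬝ᵥ (B n *ᵥ z)) l (𝓝 (z ⬝ᵥ (A *ᵥ z)))) (i j : ι) :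
    Tendsto (fun n => B n i j) l (𝓝 (A i j)) := by
  classical
  have polar (M : Matrix ι ι ℝ) (hM : M.IsSymm) :
      M i j = ((Pi.single i 1 + Pi.single j 1) ⬝ᵥ (M *ᵥ (Pi.single i 1 + Pi.single j 1))
        - Pi.single i 1 ⬝ᵥ (M *ᵥ Pi.single i 1)
        - Pi.single j 1 ⬝ᵥ (M *ᵥ Pi.single j 1)) / 2 := by
    have := hM.apply i j
    simp only [Matrix.mulVec_add, add_dotProduct, dotProduct_add, single_one_dotProduct,
      Matrix.mulVec_single_one, Matrix.col_apply]
    linarith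
  rw [polar A hA]
  simp_rw [fun n => polar (B n) (hB n)]
  exact (((h _).sub (h _)).sub (h _)).div_const 2

/-- For vectors `c_n ∈ ℝ^d` and real symmetric `d×d` matrices `B_n`
(`n ≥ 0`), the Gaussian characteristic functions
`f_n(z) = exp(i⟨c_n, z⟩ − ½ zᵀ B_n z)` converge pointwise to `f_0` if and only if
`c_n → c_0` and `B_n → B_0` entrywise. -/
theorem gaussian_char_functions_pointwise_iff_params
    (d : ℕ) (hd : 0 < d)
    (c : ℕ → Fin d → ℝ) (B : ℕ → Matrix (Fin d) (Fin d) ℝ)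
    (hBsymm : ∀ n, (B n).IsSymm) :
    ((∀ z : Fin d → ℝ,
        Tendsto
          (fun n => Complex.exp (Complex.I * ((c n) ⬝ᵥ z : ℝ)
            - (1 / 2 : ℂ) * ((z ⬝ᵥ ((B n) *ᵥ z) : ℝ) : ℂ)))
          atTop
          (𝓝 (Complex.exp (Complex.I * ((c 0) ⬝ᵥ z : ℝ)
            - (1 / 2 : ℂ) * ((z ⬝ᵥ ((B 0) *ᵥ z) : ℝ) : ℂ))))) ↔
      ((∀ i, Tendsto (fun n => c n i) atTop (𝓝 (c 0 i))) ∧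
       (∀ i j, Tendsto (fun n => B n i j) atTop (𝓝 (B 0 i j))))) := by
  constructor
  · intro h
    have hquad (z : Fin d → ℝ) :
        Tendsto (fun n => z ⬝ᵥ (B n *ᵥ z)) atTop (𝓝 (z ⬝ᵥ (B 0 *ᵥ z))) := by
      have hre (x y : ℝ) : -2 * Real.log ‖Complex.exp (Complex.I * x - (1 / 2 : ℂ) * y)‖ = y := by
        rw [Complex.norm_exp, Real.log_exp]
        simp
      have := ((h z).norm.log (norm_ne_zero_iff.mpr (Complex.exp_ne_zero _))).const_mul (-2)
      simpa only [hre] using this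
    refine ⟨fun i => tendsto_of_forall_tendsto_exp_mul_I fun t => ?_,
      Matrix.IsSymm.tendsto_apply_of_tendsto_quadratic hBsymm (hBsymm 0) hquad⟩
    have hexp (v : Fin d → ℝ) (y : ℝ) :
        Complex.exp (Complex.I * (v ⬝ᵥ Pi.single i t : ℝ) - (1 / 2 : ℂ) * y)
          * Complex.exp ((1 / 2 : ℂ) * y) = Complex.exp ((t * v i : ℝ) * Complex.I) := by
      rw [← Complex.exp_add, dotProduct_single]
      congr 1
      push_cast
      ring
    have hcomp := ((hquad (Pi.single i t)).ofReal.const_mul (1 / 2 : ℂ)).cexp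
    simpa only [hexp] using (h (Pi.single i t)).mul hcomp
  · rintro ⟨hc, hB⟩ z
    have hc' : Tendsto c atTop (𝓝 (c 0)) := tendsto_pi_nhds.mpr hc
    have hB' : Tendsto B atTop (𝓝 (B 0)) :=
      tendsto_pi_nhds.mpr fun i => tendsto_pi_nhds.mpr fun j => hB i j
    have hlin : Tendsto (fun n => c n ⬝ᵥ z) atTop (𝓝 (c 0 ⬝ᵥ z)) :=
      ((continuous_id.dotProduct continuous_const).tendsto (c 0)).comp hc'
    have hquad : Tendsto (fun n => z ⬝ᵥ (B n *ᵥ z)) atTop (𝓝 (z ⬝ᵥ (B 0 *ᵥ z))) :=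
      ((continuous_const.dotProduct (continuous_id.matrix_mulVec continuous_const)).tendsto
        (B 0)).comp hB'
    exact ((hlin.ofReal.const_mul Complex.I).sub (hquad.ofReal.const_mul (1 / 2 : ℂ))).cexp
end
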